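/- Let Ω ⊂ ℝ^N (N ≥ 2) be a bounded connected open set, and let f : ℝ → ℝ be continuously differentiable. Suppose there exists ξ ∈ ℝ with f(ξ) = 0 such that f(t)·(t − ξ) ≤ 0 for all t ∈ ℝ. Then every weak Neumann solution u of −Δu = f(u) in Ω is constant on the closure of Ω, and its constant value is a root of f. -/

import Mathlib

open MeasureTheory Bornology
open scoped RealInnerProductSpace

/-!
Testing the weak equation with `u - ξ` gives `∫_Ω ‖∇u‖² = ∫_Ω f(u) (u - ξ) ≤ 0`, so `∇u = 0` on `Ω`
and `u` is a constant `c` there by connectedness. Testing with `1` then gives `f(c) |Ω| = 0`.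
Test functions must be `C¹` on the whole space, so `u` is first replaced by a global `C¹` function
that agrees with it on the closure of `Ω`.
-/

theorem exists_contDiff_eqOn_of_contDiffOn {E F : Type*}
    [NormedAddCommGroup E] [NormedSpace ℝ E] [FiniteDimensional ℝ E]
    [NormedAddCommGroup F] [NormedSpace ℝ F] {n : ℕ∞} {u : E → F} {s V : Set E}
    (hs : IsClosed s) (hV : IsOpen V) (hsV : s ⊆ V) (hu : ContDiffOn ℝ n u V) :
    ∃ v : E → F, ContDiff ℝ n v ∧ Set.EqOn v u s := by
  -- A partition of unity glues `u` on `V` with `0` on `sᶜ`: the condition `x ∈ s → y = u x` on the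
  -- value `y` at `x` is convex in `y`.
  obtain ⟨v, hv⟩ := exists_contMDiffMap_forall_mem_convex_of_local (n := n)
    (modelWithCornersSelf ℝ E) (t := fun x => {y : F | x ∈ s → y = u x})
    (fun x => by by_cases hx : x ∈ s <;> simp [hx, convex_singleton, convex_univ])
    (fun x => by
      by_cases hx : x ∈ s
      · exact ⟨V, hV.mem_nhds (hsV hx), u, hu.contMDiffOn, fun y _ _ => rfl⟩
      · exact ⟨sᶜ, hs.isOpen_compl.mem_nhds hx, 0, contMDiffOn_const,
          fun y hy hy' => absurd hy' hy⟩)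
  exact ⟨v, v.contMDiff.contDiff, hv⟩

theorem exists_eqOn_const_closure_of_fderiv_eq_zero {𝕜 E F : Type*}
    [NontriviallyNormedField 𝕜] [IsRCLikeNormedField 𝕜]
    [NormedAddCommGroup E] [NormedSpace ℝ E] [NormedSpace 𝕜 E]
    [NormedAddCommGroup F] [NormedSpace 𝕜 F] {u : E → F} {s : Set E} (hs : IsOpen s)
    (hs' : IsPreconnected s) (hu : DiffContOnCl 𝕜 u s)
    (hu' : s.EqOn (fderiv 𝕜 u) 0) : ∃ c : F, Set.EqOn u (fun _ => c) (closure s) := by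
  obtain ⟨c, hc⟩ := hs.exists_is_const_of_fderiv_eq_zero hs' hu.differentiableOn hu'
  exact ⟨c, Set.EqOn.of_subset_closure hc hu.continuousOn continuousOn_const subset_closure le_rfl⟩

theorem eqOn_zero_of_setIntegral_nonpos_of_nonneg {X : Type*} [TopologicalSpace X]
    [MeasurableSpace X] [OpensMeasurableSpace X] {μ : Measure X} [μ.IsOpenPosMeasure]
    {p : X → ℝ} {U : Set X} (hU : IsOpen U) (hp : ContinuousOn p U) (hp_nonneg : ∀ x ∈ U, 0 ≤ p x)
    (hp_int : IntegrableOn p U μ) (h : ∫ x in U, p x ∂μ ≤ 0) : Set.EqOn p 0 U := by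
  have hp_zero : ∫ x in U, p x ∂μ = 0 :=
    h.antisymm (setIntegral_nonneg hU.measurableSet hp_nonneg)
  have hp_ae : p =ᵐ[μ.restrict U] 0 :=
    (setIntegral_eq_zero_iff_of_nonneg_ae
      (ae_restrict_of_forall_mem hU.measurableSet hp_nonneg) hp_int).1 hp_zero
  exact Measure.eqOn_open_of_ae_eq hp_ae hU hp continuousOn_const

theorem continuous_gradient_of_contDiff {𝕜 E : Type*} [RCLike 𝕜] [NormedAddCommGroup E]
    [InnerProductSpace 𝕜 E] [CompleteSpace E] {u : E → 𝕜} (hu : ContDiff 𝕜 1 u) :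
    Continuous (gradient u) :=
  (InnerProductSpace.toDual 𝕜 E).symm.continuous.comp (hu.continuous_fderiv one_ne_zero)

section WeakNeumann

variable {E : Type*} [NormedAddCommGroup E] [InnerProductSpace ℝ E]

/-- `u` is a weak solution of `-Δu = g` in `Ω` with homogeneous Neumann boundary condition, with
integrals taken against `μ`. The boundary condition is encoded by test functions that need not
vanish on the boundary, so the boundary is not assumed to have a normal. -/
def IsWeakNeumannSolution [CompleteSpace E] [MeasurableSpace E] (μ : Measure E) (Ω : Set E)
    (g u : E → ℝ) : Prop :=
  ∀ φ : E → ℝ, ContDiff ℝ 1 φ →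
    ∫ x in Ω, ⟪gradient u x, gradient φ x⟫ ∂μ = ∫ x in Ω, g x * φ x ∂μ

namespace IsWeakNeumannSolution

section CompleteSpace

variable [CompleteSpace E] [MeasurableSpace E] {μ : Measure E} {Ω : Set E} {g u v : E → ℝ}

theorem setIntegral_source_eq_zero (h : IsWeakNeumannSolution μ Ω g u) :
    ∫ x in Ω, g x ∂μ = 0 := by
  simpa using (h (fun _ => 1) contDiff_const).symm

theorem setIntegral_norm_gradient_sq (h : IsWeakNeumannSolution μ Ω g u) (hu : ContDiff ℝ 1 u)
    (ξ : ℝ) : ∫ x in Ω, ‖gradient u x‖ ^ 2 ∂μ = ∫ x in Ω, g x * (u x - ξ) ∂μ := by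
  have hgrad (x : E) : gradient (fun y => u y - ξ) x = gradient u x := by
    simp only [gradient, fderiv_sub_const]
  simpa only [hgrad, real_inner_self_eq_norm_sq] using
    h (fun x => u x - ξ) (hu.sub contDiff_const)

theorem congr_eqOn [OpensMeasurableSpace E] (h : IsWeakNeumannSolution μ Ω g u) (hΩ : IsOpen Ω)
    (hvu : Set.EqOn v u Ω) : IsWeakNeumannSolution μ Ω g v := fun φ hφ => by
  rw [← h φ hφ]
  refine setIntegral_congr_fun hΩ.measurableSet fun x hx => ?_
  simp only [(hvu.eventuallyEq_of_mem (hΩ.mem_nhds hx)).gradient_eq]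

end CompleteSpace

section FiniteDimensional

variable [FiniteDimensional ℝ E] [MeasurableSpace E] [OpensMeasurableSpace E] {μ : Measure E}
  [μ.IsOpenPosMeasure] [IsFiniteMeasureOnCompacts μ] {Ω : Set E} {g u : E → ℝ} {ξ : ℝ}

theorem gradient_eqOn_zero (h : IsWeakNeumannSolution μ Ω g u) (hΩ : IsOpen Ω)
    (hΩ_bdd : IsBounded Ω) (hu : ContDiff ℝ 1 u) (hsign : ∀ x ∈ Ω, g x * (u x - ξ) ≤ 0) :
    Set.EqOn (gradient u) 0 Ω := by
  have hcont : Continuous fun x => ‖gradient u x‖ ^ 2 :=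
    (continuous_gradient_of_contDiff hu).norm.pow 2
  have hint : IntegrableOn (fun x => ‖gradient u x‖ ^ 2) Ω μ :=
    (hcont.continuousOn.integrableOn_compact hΩ_bdd.isCompact_closure).mono_set subset_closure
  have henergy : ∫ x in Ω, ‖gradient u x‖ ^ 2 ∂μ ≤ 0 :=
    (h.setIntegral_norm_gradient_sq hu ξ).trans_le (setIntegral_nonpos hΩ.measurableSet hsign)
  have hzero : Set.EqOn (fun x => ‖gradient u x‖ ^ 2) 0 Ω :=
    eqOn_zero_of_setIntegral_nonpos_of_nonneg hΩ hcont.continuousOn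
      (fun x _ => sq_nonneg ‖gradient u x‖) hint henergy
  exact fun x hx => norm_eq_zero.1 (sq_eq_zero_iff.1 (hzero hx))

theorem exists_eqOn_const_closure (h : IsWeakNeumannSolution μ Ω g u) (hΩ : IsOpen Ω)
    (hΩ_bdd : IsBounded Ω) (hΩ_conn : IsPreconnected Ω) {V : Set E} (hV : IsOpen V)
    (hΩV : closure Ω ⊆ V) (hu : ContDiffOn ℝ 1 u V) (hsign : ∀ x ∈ Ω, g x * (u x - ξ) ≤ 0) :
    ∃ c : ℝ, Set.EqOn u (fun _ => c) (closure Ω) := by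
  obtain ⟨v, hv, hvu⟩ : ∃ v : E → ℝ, ContDiff ℝ 1 v ∧ Set.EqOn v u (closure Ω) :=
    exists_contDiff_eqOn_of_contDiffOn (n := 1) isClosed_closure hV hΩV hu
  have hvuΩ : Set.EqOn v u Ω := hvu.mono subset_closure
  have hgrad : Set.EqOn (gradient v) 0 Ω :=
    (h.congr_eqOn hΩ hvuΩ).gradient_eqOn_zero hΩ hΩ_bdd hv fun x hx => by
      simpa only [hvuΩ hx] using hsign x hx
  have hfderiv : Set.EqOn (fderiv ℝ v) 0 Ω := fun x hx => by
    rw [← toDual_gradient, hgrad hx, Pi.zero_apply, Pi.zero_apply, map_zero]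
  obtain ⟨c, hc⟩ := exists_eqOn_const_closure_of_fderiv_eq_zero hΩ hΩ_conn
    (hv.differentiable one_ne_zero).diffContOnCl hfderiv
  exact ⟨c, hvu.symm.trans hc⟩

end FiniteDimensional

end IsWeakNeumannSolution

theorem stmt_0_general [FiniteDimensional ℝ E] [MeasurableSpace E] [OpensMeasurableSpace E]
    {μ : Measure E} [μ.IsOpenPosMeasure] [IsFiniteMeasureOnCompacts μ]
    {Ω V : Set E} (hΩ_open : IsOpen Ω) (hΩ_bdd : IsBounded Ω) (hΩ_conn : IsConnected Ω)
    (hV_open : IsOpen V) (hV : closure Ω ⊆ V) {u : E → ℝ} (hu : ContDiffOn ℝ 1 u V)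
    {f : ℝ → ℝ} {ξ : ℝ} (hsign : ∀ t ∈ u '' Ω, f t * (t - ξ) ≤ 0)
    (hweak : IsWeakNeumannSolution μ Ω (fun x => f (u x)) u) :
    ∃ c : ℝ, f c = 0 ∧ ∀ x ∈ closure Ω, u x = c := by
  obtain ⟨c, hc⟩ := hweak.exists_eqOn_const_closure hΩ_open hΩ_bdd hΩ_conn.isPreconnected
    hV_open hV hu (Set.forall_mem_image.1 hsign)
  have hvolume : μ.real Ω ≠ 0 :=
    (ENNReal.toReal_pos (hΩ_open.measure_pos μ hΩ_conn.nonempty).ne'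
      hΩ_bdd.measure_lt_top.ne).ne'
  have hsource : μ.real Ω * f c = 0 :=
    calc μ.real Ω * f c = ∫ _ in Ω, f c ∂μ := by rw [setIntegral_const, smul_eq_mul]
      _ = ∫ x in Ω, f (u x) ∂μ :=
        setIntegral_congr_fun hΩ_open.measurableSet fun x hx =>
          congrArg f (hc (subset_closure hx)).symm
      _ = 0 := hweak.setIntegral_source_eq_zero
  exact ⟨c, (mul_eq_zero.1 hsource).resolve_left hvolume, hc⟩

end WeakNeumann

/-- If `f` has a root `ξ` with `f(t)(t-ξ) ≤ 0` for all `t`, then every weak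
Neumann solution of `-Δu = f(u)` in a bounded connected open set `Ω ⊆ ℝ^N`, `N ≥ 2`, is
constant on `closure Ω` and its value is a root of `f`. -/
theorem stmt_0 {N : ℕ} (hN : 2 ≤ N)
    (Ω : Set (EuclideanSpace ℝ (Fin N))) (hΩ_open : IsOpen Ω)
    (hΩ_bdd : IsBounded Ω) (hΩ_conn : IsConnected Ω)
    (f : ℝ → ℝ) (hf : ContDiff ℝ 1 f)
    (ξ : ℝ) (hξ : f ξ = 0) (hsign : ∀ t : ℝ, f t * (t - ξ) ≤ 0)
    (u : EuclideanSpace ℝ (Fin N) → ℝ)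
    (V : Set (EuclideanSpace ℝ (Fin N))) (hV_open : IsOpen V)
    (hV : closure Ω ⊆ V) (hu : ContDiffOn ℝ 1 u V)
    (hweak : ∀ φ : EuclideanSpace ℝ (Fin N) → ℝ, ContDiff ℝ 1 φ →
      ∫ x in Ω, ⟪gradient u x, gradient φ x⟫ = ∫ x in Ω, f (u x) * φ x) :
    ∃ c : ℝ, f c = 0 ∧ ∀ x ∈ closure Ω, u x = c :=
  stmt_0_general hΩ_open hΩ_bdd hΩ_conn hV_open hV hu (fun t _ => hsign t) hweak
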